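/- arXiv:2303.16481 — 4 statements merged into one kernel-verified Lean document; each statement's English description precedes it below -/
import Mathlib

section
/- Let X be an involutive BE algebra. Then for all x, y, z ∈ X: (1) (x∧y)→z = (y→x)→(y→z); (2) z→(x∨y) = (x→y)→(z→y); (3) x∧y ≤ x, x∧y ≤ y, x ≤ x∨y and y ≤ x∨y. Moreover, if X is self distributive, then (4) x∧y = y∧x and x∨y = y∨x for all x, y ∈ X. -/
/-!
Involution gives contraposition `x* → y* = y → x`, hence `x ∧ y = ((y → x) → y*)*`. Contraposing
`(x ∧ y) → z` and exchanging premises yields the formula for `(x ∧ y) → z` (`inf_imp`); the one for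
`z → (x ∨ y)` is an instance of exchange (`imp_sup`), and the order bounds are special cases of
these two. Under self distributivity, `inf_imp` reads `(x ∧ y) → z = y → (x → z)`, which is
symmetric in `x, y` by exchange; `z = 0` gives `x ∧ y = y ∧ x`, and then De Morgan's law
`x ∨ y = (x* ∧ y*)*` gives `x ∨ y = y ∨ x`.
-/

/-- A bounded involutive BE algebra. -/
class InvBE (X : Type*) where
  imp : X → X → X
  one : X
  zero : X
  be1 : ∀ x : X, imp x x = one
  be2 : ∀ x : X, imp x one = one
  be3 : ∀ x : X, imp one x = x
  be4 : ∀ x y z : X, imp x (imp y z) = imp y (imp x z)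
  bound : ∀ x : X, imp zero x = one
  dn : ∀ x : X, imp (imp x zero) zero = x

namespace InvBE

variable {X : Type*} [InvBE X]

/-- Negation: `x* = x → 0`. -/
def neg (x : X) : X := imp x zero

/-- `x ∨ y = (x → y) → y`. -/
def sup (x y : X) : X := imp (imp x y) y

/-- `x ∧ y = ((x* → y*) → y*)*`. -/
def inf (x y : X) : X := neg (imp (imp (neg x) (neg y)) (neg y))

/-- `x ≤ y` iff `x → y = 1`. -/
def le (x y : X) : Prop := imp x y = one

/-- `x ≤_Q y` iff `x = x ∧ y`. -/
def leQ (x y : X) : Prop := x = inf x y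

end InvBE

namespace InvBE

variable {X : Type*} [InvBE X]

theorem neg_neg' (x : X) : neg (neg x) = x := dn x

theorem neg_imp_neg (x y : X) : imp (neg x) (neg y) = imp y x := by
  unfold neg
  rw [be4, dn]

theorem neg_imp (x y : X) : imp (neg x) y = imp (neg y) x := by
  rw [← neg_imp_neg x (neg y), neg_neg']

theorem inf_imp (x y z : X) : imp (inf x y) z = imp (imp y x) (imp y z) := by
  rw [inf, neg_imp, neg_imp_neg, be4, neg_imp_neg]

theorem imp_sup (x y z : X) : imp z (sup x y) = imp (imp x y) (imp z y) :=
  be4 _ _ _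

theorem sup_eq_neg_inf_neg (x y : X) : sup x y = neg (inf (neg x) (neg y)) := by
  simp only [inf, neg_neg', sup]

theorem inf_comm_of_selfDistrib
    (h : ∀ x y z : X, imp x (imp y z) = imp (imp x y) (imp x z)) (x y : X) :
    inf x y = inf y x := by
  have key : neg (inf x y) = neg (inf y x) := by
    unfold neg
    rw [inf_imp, inf_imp, ← h, ← h, be4]
  rw [← neg_neg' (inf x y), key, neg_neg']

end InvBE

open InvBE in
theorem stmt_1 {X : Type*} [InvBE X] :
    (∀ x y z : X, imp (inf x y) z = imp (imp y x) (imp y z)) ∧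
    (∀ x y z : X, imp z (sup x y) = imp (imp x y) (imp z y)) ∧
    (∀ x y : X, le (inf x y) x ∧ le (inf x y) y ∧ le x (sup x y) ∧ le y (sup x y)) ∧
    ((∀ x y z : X, imp x (imp y z) = imp (imp x y) (imp x z)) →
      ∀ x y : X, inf x y = inf y x ∧ sup x y = sup y x) := by
  refine ⟨inf_imp, imp_sup, fun x y => ⟨?_, ?_, ?_, ?_⟩, fun h x y => ⟨?_, ?_⟩⟩
  · rw [le, inf_imp, be1]
  · rw [le, inf_imp, be1, be2]
  · rw [le, imp_sup, be1]
  · rw [le, imp_sup, be1, be2]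
  · exact inf_comm_of_selfDistrib h x y
  · rw [sup_eq_neg_inf_neg, inf_comm_of_selfDistrib h, ← sup_eq_neg_inf_neg]
end

section
/- Let X be a quantum-Wajsberg algebra. Then for all x, y ∈ X: (1) x→(y∧x) = x→y; (2) x ≤_Q x*→y and x ≤_Q y→x; (3) x→y = 0 iff (x = 1 and y = 0); (4) (x→y)*∧x = (x→y)*; (5) (x∧y)∧y = x∧y; (6) x∧y ≤_Q y and y ≤_Q x∨y; (7) x∨(y∧x) = x; (8) x∧(y∨x) = x; (9) (x→y)→(y∧x) = x; (10) (x∨y)→y = x→y; (11) (x∨y)∨y = x∨y; (12) x ≤ y iff y∧x = x. -/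
namespace InvBE

variable {X : Type*} [InvBE X]

theorem contra (x y : X) : imp x y = imp (neg y) (neg x) := by
  conv_lhs => rw [← dn y]
  exact be4 _ _ _

theorem neg_inf_eq (x y : X) : neg (inf x y) = sup (neg x) (neg y) := neg_neg' _

theorem neg_zero' : neg (zero : X) = one := be1 _

theorem neg_one' : neg (one : X) = zero := be3 _

theorem inf_zero (x : X) : inf x zero = zero := by
  simp only [inf, neg_zero', be2, neg_one']

theorem zero_inf (x : X) : inf zero x = zero := by
  simp only [inf, neg_zero', be3, be1, neg_one']

end InvBE

open InvBE in
theorem stmt_5 {X : Type*} [InvBE X]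
    (qw : ∀ x y z : X, imp x (inf (inf x y) (inf z x)) = inf (imp x y) (imp x z)) :
    (∀ x y : X, imp x (inf y x) = imp x y) ∧
    (∀ x y : X, leQ x (imp (neg x) y) ∧ leQ x (imp y x)) ∧
    (∀ x y : X, imp x y = zero ↔ (x = one ∧ y = zero)) ∧
    (∀ x y : X, inf (neg (imp x y)) x = neg (imp x y)) ∧
    (∀ x y : X, inf (inf x y) y = inf x y) ∧
    (∀ x y : X, leQ (inf x y) y ∧ leQ y (sup x y)) ∧
    (∀ x y : X, sup x (inf y x) = x) ∧
    (∀ x y : X, inf x (sup y x) = x) ∧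
    (∀ x y : X, imp (imp x y) (inf y x) = x) ∧
    (∀ x y : X, imp (sup x y) y = imp x y) ∧
    (∀ x y : X, sup (sup x y) y = sup x y) ∧
    (∀ x y : X, le x y ↔ inf y x = x) := by
  have h2 : ∀ x y : X, inf (neg x) (imp x y) = neg x := by
    intro x y
    have h := qw x zero y
    rw [inf_zero, zero_inf] at h
    exact h.symm
  have h2a : ∀ x y : X, inf x (imp (neg x) y) = x := by
    intro x y
    have h := h2 (neg x) y
    rwa [neg_neg'] at h
  have h2b : ∀ x y : X, inf x (imp y x) = x := by
    intro x y
    rw [contra y x]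
    exact h2a _ _
  have h9 : ∀ x y : X, imp (imp x y) (inf y x) = x := by
    intro x y
    have h := congrArg neg (h2 x y)
    rw [neg_inf_eq, neg_neg'] at h
    rw [contra (imp x y), neg_inf_eq]
    unfold sup at h ⊢
    rwa [← contra x y, contra (imp x y) (neg x), neg_neg']
  have h1 : ∀ x y : X, imp x (inf y x) = imp x y := by
    intro x y
    have h := h9 (imp x y) (neg x)
    rw [h2] at h
    rw [contra, neg_inf_eq]
    unfold sup
    rwa [← contra x y]
  have h10 : ∀ x y : X, imp (sup x y) y = imp x y := by
    intro x y
    have h := h1 (neg y) (neg x)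
    rwa [contra (neg y) (inf _ _), neg_inf_eq, ← contra x y, neg_neg', neg_neg'] at h
  have h11 : ∀ x y : X, sup (sup x y) y = sup x y := by
    intro x y
    change imp (imp (sup x y) y) y = sup x y
    rw [h10]
    rfl
  have h5 : ∀ x y : X, inf (inf x y) y = inf x y := by
    intro x y
    rw [← neg_neg' (inf (inf x y) y), neg_inf_eq, neg_inf_eq, h11, ← neg_inf_eq, neg_neg']
  refine ⟨h1, fun x y => ⟨(h2a x y).symm, (h2b x y).symm⟩, ?_, ?_, h5,
    fun x y => ⟨(h5 x y).symm, (h2b y _).symm⟩, ?_, fun x y => h2b x _, h9, h10, h11, ?_⟩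
  · intro x y
    constructor
    · intro h
      have hx := h2 x y
      rw [h, inf_zero] at hx
      have hx1 : x = one := by rw [← neg_neg' x, ← hx, neg_zero']
      refine ⟨hx1, ?_⟩
      rwa [hx1, be3] at h
    · rintro ⟨rfl, rfl⟩
      exact be3 _
  · intro x y
    -- Negating both sides gives `h10` at `y*`, `x*`, as `(a → b) ∨ b` is `(a ∨ b) → b` by definition.
    rw [← neg_neg' (inf _ x), neg_inf_eq, neg_neg', contra x y]
    exact congrArg neg (h10 _ _)
  · intro x y
    unfold sup
    rw [h1, h9]
  · intro x y
    unfold le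
    constructor
    · intro h
      have h' := h9 x y
      rwa [h, be3] at h'
    · intro h
      rw [← h1, h, be1]
end

section
/- Every Wajsberg algebra (X, →, *, 1) is a quantum-Wajsberg algebra: X is an involutive bounded BE algebra (with 0 = 1* and the negation coinciding with x ↦ x→0) and satisfies the axiom (QW): x→((x∧y)∧(z∧x)) = (x→y)∧(x→z) for all x, y, z ∈ X. -/
/-!
A Wajsberg algebra is a bounded lattice under `x ≤ y ↔ x → y = 1`, and `inf` is its meet
(`le_inf_iff`). The exchange law, `x* = x → 0` and `x** = x` follow from (W1)-(W4) by order
arguments. The axiom (QW) then rests on residuation (`le_imp_iff`): with `x ⊙ w = (x → w*)*`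
one has `w ≤ x → y ↔ x ⊙ w ≤ y`. Since also `x ⊙ w ≤ x`, the element `w` lies below either side
of (QW) exactly when `x ⊙ w` lies below both `y` and `z`, and the two sides agree by antisymmetry.
-/

/-- A Wajsberg algebra. -/
class Wajsberg (X : Type*) where
  imp : X → X → X
  neg : X → X
  one : X
  w1 : ∀ x : X, imp one x = x
  w2 : ∀ x y z : X, imp (imp y z) (imp (imp z x) (imp y x)) = one
  w3 : ∀ x y : X, imp (imp x y) y = imp (imp y x) x
  w4 : ∀ x y : X, imp (imp (neg x) (neg y)) (imp y x) = one

namespace Wajsberg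

variable {X : Type*} [Wajsberg X]

/-- `0 = 1*`. -/
def zero : X := neg one

/-- `x ≤ y` iff `x → y = 1`. -/
def le (x y : X) : Prop := imp x y = one

/-- `x ∨ y = (x → y) → y`. -/
def sup (x y : X) : X := imp (imp x y) y

/-- `x ∧ y = ((x* → y*) → y*)*`. -/
def inf (x y : X) : X := neg (imp (imp (neg x) (neg y)) (neg y))

/-- `x ≤_Q y` iff `x = x ∧ y`. -/
def leQ (x y : X) : Prop := x = inf x y

end Wajsberg

namespace Wajsberg

variable {X : Type*} [Wajsberg X]

theorem imp_self' (x : X) : imp x x = one := by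
  have h := w2 x one one
  simpa only [w1] using h

theorem le_antisymm' {x y : X} (h : le x y) (h' : le y x) : x = y := by
  unfold le at h h'
  have e := w3 x y
  rw [h, h', w1, w1] at e
  exact e.symm

/-- The instance `y = 1` of (W2). -/
theorem le_sup_left' (x y : X) : le x (imp (imp x y) y) := by
  have h := w2 y one x
  rwa [w1, w1] at h

theorem imp_one (x : X) : imp x one = one := by
  -- `(x → 1) → 1 = (1 → x) → x = 1`, and `x` lies below the left-hand side.
  have h := le_sup_left' x one
  rwa [le, w3, w1, imp_self'] at h

theorem le_trans' {x y z : X} (h : le x y) (h' : le y z) : le x z := by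
  unfold le at h h'
  have e := w2 z x y
  rwa [h, h', w1, w1] at e

theorem le_imp_right (x y : X) : le x (imp y x) := by
  have h := w2 x y one
  rwa [imp_one, w1, w1] at h

theorem imp_anti {x y : X} (h : le x y) (z : X) : le (imp y z) (imp x z) := by
  unfold le at h
  have e := w2 z x y
  rwa [h, w1] at e

theorem exchange_le (x y z : X) : le (imp x (imp y z)) (imp y (imp x z)) :=
  -- Pass through `((y → z) → z) → (x → z)`, using `y ≤ (y → z) → z`.
  le_trans' (w2 z x (imp y z)) (imp_anti (le_sup_left' y z) (imp x z))

theorem exchange (x y z : X) : imp x (imp y z) = imp y (imp x z) :=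
  le_antisymm' (exchange_le x y z) (exchange_le y x z)

theorem zero_le' (x : X) : le zero x := by
  have h := w4 x one
  rw [w1] at h
  exact le_trans' (le_imp_right (neg one) (neg x)) h

/-- `x* → 0 = x`, the step from which both `x → 0 = x*` and involutivity follow. -/
theorem neg_imp_zero (x : X) : imp (neg x) zero = x := by
  apply le_antisymm'
  · have h := w4 x one
    rwa [w1] at h
  · have h : le (neg x) (imp x zero) :=
      le_trans' (le_imp_right (neg x) (neg zero)) (w4 zero x)
    rwa [le, exchange] at h

theorem imp_zero (x : X) : imp x zero = neg x := by
  conv_lhs => rw [← neg_imp_zero x]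
  rw [w3, show imp zero (neg x) = one from zero_le' _, w1]

theorem neg_neg' (x : X) : neg (neg x) = x := by
  rw [← imp_zero (neg x), neg_imp_zero]

theorem neg_imp_neg (x y : X) : imp (neg x) (neg y) = imp y x := by
  rw [← imp_zero y, exchange, neg_imp_zero]

theorem neg_le_neg_iff' {x y : X} : le (neg x) (neg y) ↔ le y x := by
  rw [le, le, neg_imp_neg]

theorem neg_le_comm {x y : X} : le (neg x) y ↔ le (neg y) x := by
  rw [← neg_le_neg_iff', neg_neg']

theorem inf_le_right' (x y : X) : le (inf x y) y :=
  neg_le_comm.2 (le_imp_right _ _)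

theorem inf_le_left' (x y : X) : le (inf x y) x := by
  unfold inf
  rw [w3]
  exact neg_le_comm.2 (le_imp_right _ _)

theorem sup_le' {x y z : X} (hx : le x z) (hy : le y z) : le (imp (imp x y) y) z := by
  -- `(x → y) → y ≤ (z → y) → y = (y → z) → z = z`.
  have h := imp_anti (imp_anti hx y) y
  rwa [w3 z y, show imp y z = one from hy, w1] at h

/-- `inf` is the meet for the order `le`. -/
theorem le_inf_iff {w x y : X} : le w (inf x y) ↔ le w x ∧ le w y := by
  refine ⟨fun h => ⟨le_trans' h (inf_le_left' x y), le_trans' h (inf_le_right' x y)⟩, ?_⟩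
  rintro ⟨hx, hy⟩
  rw [← neg_le_neg_iff', inf, neg_neg']
  exact sup_le' (neg_le_neg_iff'.2 hx) (neg_le_neg_iff'.2 hy)

/-- Residuation for the product `x ⊙ w = (x → w*)*`. -/
theorem le_imp_iff {w x y : X} : le w (imp x y) ↔ le (neg (imp x (neg w))) y := by
  have h : imp (neg (imp x (neg w))) y = imp w (imp x y) := by
    rw [← neg_imp_neg, neg_neg', exchange, neg_imp_neg, exchange]
  rw [le, le, h]

theorem eq_of_forall_le_iff' {a b : X} (h : ∀ w : X, le w a ↔ le w b) : a = b :=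
  le_antisymm' ((h a).1 (imp_self' a)) ((h b).2 (imp_self' b))

theorem qw (x y z : X) : imp x (inf (inf x y) (inf z x)) = inf (imp x y) (imp x z) := by
  apply eq_of_forall_le_iff'
  intro w
  have hx : le (neg (imp x (neg w))) x := by
    rw [← le_imp_iff, imp_self']
    exact imp_one w
  simp only [le_inf_iff, le_imp_iff, hx, true_and, and_true]

end Wajsberg

open Wajsberg in
theorem stmt_15 {X : Type*} [Wajsberg X] :
    (∀ x : X, imp x x = one) ∧
    (∀ x : X, imp x one = one) ∧
    (∀ x : X, imp one x = x) ∧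
    (∀ x y z : X, imp x (imp y z) = imp y (imp x z)) ∧
    (∀ x : X, imp (zero : X) x = one) ∧
    (∀ x : X, imp x (zero : X) = neg x) ∧
    (∀ x : X, neg (neg x) = x) ∧
    (∀ x y z : X, imp x (inf (inf x y) (inf z x)) = inf (imp x y) (imp x z)) := by
  exact ⟨imp_self', imp_one, w1, exchange, zero_le', imp_zero, neg_neg', qw⟩
end

section
/- A quantum-Wajsberg algebra (X, →, *, 1) is a Wajsberg algebra (equivalently, satisfies x∧y = y∧x for all x, y ∈ X) if and only if for all x, y ∈ X, x ≤ y implies x ≤_Q y. -/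
namespace InvBE

variable {X : Type*} [InvBE X]

theorem inf_eq (x y : X) : inf x y = neg (imp (imp y x) (neg y)) := by
  rw [inf, neg_imp_neg]

theorem inf_le_left (x y : X) : le (inf x y) x := by
  rw [le, ← neg_imp_neg, inf, neg, neg, neg, dn, be4, be1]

theorem inf_eq_right {x y : X} (h : le y x) : inf x y = y := by
  rw [inf_eq, h, be3]
  exact dn y

theorem one_inf (x : X) : inf one x = x := inf_eq_right (be2 x)

theorem inf_one (x : X) : inf x one = x := by
  rw [inf_eq, be3, neg, neg, be3, dn]

end InvBE

open InvBE in
theorem stmt_16 {X : Type*} [InvBE X]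
    (qw : ∀ x y z : X, imp x (inf (inf x y) (inf z x)) = inf (imp x y) (imp x z)) :
    (∀ x y : X, inf x y = inf y x) ↔ (∀ x y : X, le x y → leQ x y) := by
  constructor
  · intro hc x y h
    rw [leQ, hc, inf_eq_right h]
  · intro hq x y
    have hl : inf (inf x y) x = inf x y := (hq _ _ (inf_le_left x y)).symm
    have hi : imp x (inf x y) = imp x y := by
      have h := qw x y one
      rwa [one_inf, hl, be2, inf_one] at h
    rw [← hl, inf_eq (inf x y) x, hi, ← inf_eq]
end
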